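/- For every integer n ≥ 4, the number of Dyck paths D of semilength n with L(D) = 2 is |D_n^2| = (n-3)·M_{n-4}; moreover |D_2^2| = 1 and |D_3^2| = 0. -/

import Mathlib

/-- A Dyck path of semilength `n`, encoded as a word on `Bool`
(`true` = up step `u`, `false` = down step `d`). -/
def IsDyckWord (n : ℕ) (w : List Bool) : Prop :=
  w.length = 2 * n ∧ w.count true = n ∧ w.count false = n ∧
    ∀ p : List Bool, p <+: w → p.count false ≤ p.count true

/-- The (0-based) indices of the up steps of `w`. -/
def upIdxs (w : List Bool) : List ℕ := w.findIdxs (· == true)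

/-- The (0-based) indices of the down steps of `w`. -/
def downIdxs (w : List Bool) : List ℕ := w.findIdxs (· == false)

/-- `rStat w i` is the number of `d`'s strictly between the `i`-th and the
`(i+1)`-st `u` of `w` (with `i` 1-indexed). -/
def rStat (w : List Bool) (i : ℕ) : ℕ :=
  ((w.take ((upIdxs w).getD i 0)).drop ((upIdxs w).getD (i - 1) 0 + 1)).count false

/-- `sStat w i` is the number of `u`'s strictly between the `i`-th and the
`(i+1)`-st `d` of `w` (with `i` 1-indexed). -/
def sStat (w : List Bool) (i : ℕ) : ℕ :=
  ((w.take ((downIdxs w).getD i 0)).drop ((downIdxs w).getD (i - 1) 0 + 1)).count true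

/-- The statistic `L(D) = ∏_{i=1}^{n-1} C(r_i + s_i, r_i)` of a Dyck path of semilength `n`. -/
def LStat (n : ℕ) (w : List Bool) : ℕ :=
  ∏ i ∈ Finset.Icc 1 (n - 1), Nat.choose (rStat w i + sStat w i) (rStat w i)

/-- `dyckL n k` = the set `𝒟ₙᵏ` of Dyck paths of semilength `n` with `L(D) = k`. -/
def dyckL (n k : ℕ) : Set (List Bool) := {w | IsDyckWord n w ∧ LStat n w = k}

/-- A Motzkin path, encoded as a word on `Option Bool`
(`some true` = up, `some false` = down, `none` = horizontal). -/
def IsMotzkinWord (w : List (Option Bool)) : Prop :=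
  w.count (some false) = w.count (some true) ∧
    ∀ p : List (Option Bool), p <+: w → p.count (some false) ≤ p.count (some true)

/-- `motzkin n` = the `n`-th Motzkin number `Mₙ`, the number of Motzkin paths of length `n`. -/
noncomputable def motzkin (n : ℕ) : ℕ :=
  {w : List (Option Bool) | w.length = n ∧ IsMotzkinWord w}.ncard

/-- The Motzkin ballot number `T_{n,k}`: the number of Motzkin paths of length `n`
whose first down step is in position `k` (1-indexed); by convention `T_{k-1,k} = 1`,
counting the path of `k-1` horizontal steps. -/
noncomputable def motzkinBallot (n k : ℕ) : ℕ :=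
  if n + 1 = k then 1
  else
    {w : List (Option Bool) | w.length = n ∧ IsMotzkinWord w ∧
      w.getD (k - 1) none = some false ∧ ∀ j < k - 1, w.getD j none ≠ some false}.ncard

/-- Motzkin numbers with integer index: `Mᵢ = 0` for `i < 0`. -/
noncomputable def motzkinZ (i : ℤ) : ℤ := if 0 ≤ i then (motzkin i.toNat : ℤ) else 0

/-- Motzkin ballot numbers with integer first index: `T_{n,k} = 0` for `n < 0`. -/
noncomputable def motzkinBallotZ (n : ℤ) (k : ℕ) : ℤ :=
  if 0 ≤ n then (motzkinBallot n.toNat k : ℤ) else 0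

/-- The set of returns of a Dyck path `w` of semilength `n`:
indices `1 ≤ k ≤ n` such that the path touches the `x`-axis after `2k` steps. -/
def returns (n : ℕ) (w : List Bool) : Finset ℕ :=
  (Finset.Icc 1 n).filter fun k => (w.take (2 * k)).count false = (w.take (2 * k)).count true

/-- `dyckRS n r s` = the set `𝒟ₙ^{r,s}` of Dyck paths of semilength `n` having exactly one
index `i` with `rᵢ > 0` and `sᵢ > 0`, and such that at that index `rᵢ = r` and `sᵢ = s`. -/
def dyckRS (n r s : ℕ) : Set (List Bool) :=
  {w | IsDyckWord n w ∧ ∃ i ∈ Finset.Icc 1 (n - 1),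
    (0 < rStat w i ∧ 0 < sStat w i) ∧ rStat w i = r ∧ sStat w i = s ∧
      ∀ j ∈ Finset.Icc 1 (n - 1), 0 < rStat w j ∧ 0 < sStat w j → j = i}

/-- `twoStars n w k₁ k₂` says that `k₁ < k₂` are exactly the two indices `i` of `w`
with `rᵢ > 0` and `sᵢ > 0`. -/
def twoStars (n : ℕ) (w : List Bool) (k₁ k₂ : ℕ) : Prop :=
  k₁ ∈ Finset.Icc 1 (n - 1) ∧ k₂ ∈ Finset.Icc 1 (n - 1) ∧ k₁ < k₂ ∧
    (0 < rStat w k₁ ∧ 0 < sStat w k₁) ∧ (0 < rStat w k₂ ∧ 0 < sStat w k₂) ∧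
    ∀ j ∈ Finset.Icc 1 (n - 1), 0 < rStat w j ∧ 0 < sStat w j → j = k₁ ∨ j = k₂

/-- `xStat w k` = the number of indices `i < k` with `rᵢ = 0` and `sᵢ > 0`. -/
def xStat (w : List Bool) (k : ℕ) : ℕ :=
  ((Finset.Ico 1 k).filter fun i => rStat w i = 0 ∧ 0 < sStat w i).card

/-- `yStat w k` = the number of indices `i < k` with `rᵢ > 0` and `sᵢ = 0`. -/
def yStat (w : List Bool) (k : ℕ) : ℕ :=
  ((Finset.Ico 1 k).filter fun i => 0 < rStat w i ∧ sStat w i = 0).card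

/-- The generating function `m(x) = Σ Mₙ xⁿ` of the Motzkin numbers, over `ℚ`. -/
noncomputable def motzkinGF : PowerSeries ℚ := PowerSeries.mk fun n => (motzkin n : ℚ)

/-! `L(D) = 2` means that exactly one index `i` has `rᵢ > 0` and `sᵢ > 0`, and that `rᵢ = sᵢ = 1`
there. Record for every index the two bits `rᵢ > 0` and `sᵢ > 0`. These bits determine `D`, since
the positive ones mark the ends of the runs of `D`; reading an index with only `sᵢ > 0` as an up
step, one with only `rᵢ > 0` as a down step and any other as a horizontal step turns Dyck paths of
semilength `n` into Motzkin paths of length `n - 1`. If `L(D) = 2`, removing the step of the special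
index leaves a Motzkin path of length `n - 2` cut in two as `P ++ Q`.

Except when `P` and `Q` are empty, the condition `rᵢ = 1` says that the up steps of `u P` numbered
`k` and `k + 1` from `0`, where `k` is the number of down steps of `P`, are adjacent letters; the
condition `sᵢ = 1` is its mirror image for the down steps of `Q d`. Deleting one step of each
adjacent pair leaves an arbitrary Motzkin path of length `n - 4` cut at any of its `n - 3` vertices,
and the two steps can be put back in one way only.
-/

section Lists

variable {α β : Type*} {a b : α} {k : ℕ} {l l₁ l₂ p q s t : List α}

lemma exists_eq_append_cons_of_mem_Icc {i : ℕ} (h : i ∈ Finset.Icc 1 l.length) :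
    ∃ l₁ c l₂, l = l₁ ++ c :: l₂ ∧ l₁.length + 1 = i := by
  obtain ⟨i, rfl⟩ := Nat.exists_eq_add_of_le' (Finset.mem_Icc.1 h).1
  have hlt := Nat.lt_of_succ_le (Finset.mem_Icc.1 h).2
  exact ⟨l.take i, l.get ⟨i, hlt⟩, l.drop (i + 1), by simp, by simp [hlt.le]⟩

variable [BEq α] [BEq β]

/-- Insert a copy of `a` right after the `k`-th occurrence of `a` in the list, counting from `1`:
in front when `k = 0`, at the end when there are fewer than `k` occurrences. -/
def insertAfter (a : α) : ℕ → List α → List α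
  | 0, l => a :: l
  | _ + 1, [] => [a]
  | k + 1, b :: l => b :: insertAfter a (if b == a then k else k + 1) l

lemma insertAfter_perm (a : α) (k : ℕ) (l : List α) : (insertAfter a k l).Perm (a :: l) := by
  induction l generalizing k with
  | nil => cases k <;> rfl
  | cons b l ih =>
    cases k with
    | zero => rfl
    | succ k => exact ((ih _).cons b).trans (List.Perm.swap a b l)

lemma length_insertAfter (a : α) (k : ℕ) (l : List α) :
    (insertAfter a k l).length = l.length + 1 :=
  (insertAfter_perm a k l).length_eq

lemma insertAfter_injective (a : α) (k : ℕ) : Function.Injective (insertAfter a k) := by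
  intro l l' h
  have hlen : l.length = l'.length := by
    simpa only [length_insertAfter, Nat.add_right_cancel_iff] using congrArg List.length h
  induction l generalizing k l' with
  | nil => exact (List.length_eq_zero_iff.1 hlen.symm).symm
  | cons b l ih =>
    obtain ⟨b', l', rfl⟩ := List.exists_cons_of_length_eq_add_one hlen.symm
    cases k with
    | zero => exact (List.cons.inj h).2
    | succ k =>
      obtain ⟨rfl, h'⟩ := List.cons.inj h
      rw [ih _ h' (by simpa using hlen)]

variable [LawfulBEq α] [LawfulBEq β]

lemma append_cons_inj_of_count_eq (h : p ++ a :: s = q ++ a :: t)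
    (hc : p.count a = q.count a) : p = q ∧ s = t := by
  rcases List.append_eq_append_iff.1 h with ⟨r, rfl, hr⟩ | ⟨r, rfl, hr⟩ <;>
    rcases r with _ | ⟨v, r⟩ <;> simp_all

lemma notMem_and_notMem_iff_forall_append_cons_eq :
    a ∉ p ∧ a ∉ q ↔ ∀ p' q', p ++ a :: q = p' ++ a :: q' → p' = p := by
  constructor
  · rintro ⟨hp, hq⟩ p' q' h
    have hp0 := List.count_eq_zero.2 hp
    have hcount := congrArg (List.count a) h
    simp only [List.count_append, List.count_cons_self, hp0, List.count_eq_zero.2 hq] at hcount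
    exact (append_cons_inj_of_count_eq h (by omega)).1.symm
  · refine fun h => ⟨fun hp => ?_, fun hq => ?_⟩
    · obtain ⟨p₁, p₂, rfl⟩ := List.append_of_mem hp
      simpa using h p₁ (p₂ ++ a :: q) (by simp)
    · obtain ⟨q₁, q₂, rfl⟩ := List.append_of_mem hq
      simpa using h (p ++ a :: q₁) q₂ (by simp)

lemma exists_eq_append_cons_of_lt_count (h : k < l.count a) :
    ∃ l₁ l₂, l = l₁ ++ a :: l₂ ∧ l₁.count a = k := by
  induction l generalizing k with
  | nil => simp at h
  | cons c l ih =>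
    by_cases hc : c = a
    · subst hc
      rcases k with _ | k
      · exact ⟨[], l, rfl, rfl⟩
      · obtain ⟨l₁, l₂, rfl, rfl⟩ := ih (k := k) (by simpa using h)
        exact ⟨c :: l₁, l₂, rfl, by simp⟩
    · obtain ⟨l₁, l₂, rfl, rfl⟩ := ih (k := k) (by simpa [hc] using h)
      exact ⟨c :: l₁, l₂, rfl, by simp [hc]⟩

/-- The occurrences of `a` in `l` numbered `k` and `k + 1`, counting from `0`, are adjacent. -/
def AdjacentOcc (a : α) (k : ℕ) (l : List α) : Prop :=
  ∃ l₁ l₂, l = l₁ ++ a :: a :: l₂ ∧ l₁.count a = k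

lemma adjacentOcc_count_append_cons_iff :
    AdjacentOcc a (l₁.count a) (l₁ ++ a :: l₂) ↔ l₂.head? = some a := by
  constructor
  · rintro ⟨p, q, h, hc⟩
    obtain ⟨-, rfl⟩ := append_cons_inj_of_count_eq h hc.symm
    rfl
  · intro h
    obtain ⟨q, rfl⟩ := List.head?_eq_some_iff.1 h
    exact ⟨l₁, q, rfl, rfl⟩

lemma adjacentOcc_zero_cons_self_iff : AdjacentOcc a 0 (a :: l) ↔ l.head? = some a :=
  adjacentOcc_count_append_cons_iff (l₁ := [])

lemma adjacentOcc_succ_cons_self_iff : AdjacentOcc a (k + 1) (a :: l) ↔ AdjacentOcc a k l := by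
  constructor
  · rintro ⟨_ | ⟨c, p⟩, q, h, hc⟩
    · simp at hc
    · obtain ⟨rfl, rfl⟩ := List.cons.inj h
      exact ⟨p, q, rfl, by simpa using hc⟩
  · rintro ⟨p, q, rfl, rfl⟩
    exact ⟨a :: p, q, rfl, by simp⟩

lemma adjacentOcc_cons_iff_of_ne (hb : b ≠ a) : AdjacentOcc a k (b :: l) ↔ AdjacentOcc a k l := by
  constructor
  · rintro ⟨_ | ⟨c, p⟩, q, h, hc⟩
    · simp [hb] at h
    · obtain ⟨rfl, rfl⟩ := List.cons.inj h
      exact ⟨p, q, rfl, by simpa [hb] using hc⟩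
  · rintro ⟨p, q, rfl, rfl⟩
    exact ⟨b :: p, q, rfl, by simp [hb]⟩

lemma adjacentOcc_append_iff_left (h : k + 1 < l₁.count a) :
    AdjacentOcc a k (l₁ ++ l₂) ↔ AdjacentOcc a k l₁ := by
  induction l₁ generalizing k with
  | nil => simp at h
  | cons c l ih =>
    rw [List.cons_append]
    by_cases hc : c = a
    · subst hc
      rcases k with _ | k
      · have hl : l ≠ [] := by rintro rfl; simp at h
        rw [adjacentOcc_zero_cons_self_iff, adjacentOcc_zero_cons_self_iff,
          List.head?_append_of_ne_nil _ hl]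
      · rw [adjacentOcc_succ_cons_self_iff, adjacentOcc_succ_cons_self_iff,
          ih (by simpa using h)]
    · rw [adjacentOcc_cons_iff_of_ne hc, adjacentOcc_cons_iff_of_ne hc,
        ih (by simpa [hc] using h)]

lemma AdjacentOcc.reverse {j : ℕ} (hl : AdjacentOcc a k l) (h : k + j + 2 = l.count a) :
    AdjacentOcc a j l.reverse := by
  obtain ⟨p, q, rfl, rfl⟩ := hl
  refine ⟨q.reverse, p.reverse, by simp, ?_⟩
  simp only [List.count_append, List.count_cons_self, List.count_reverse] at h ⊢
  omega

lemma adjacentOcc_reverse_iff {j : ℕ} (h : k + j + 2 = l.count a) :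
    AdjacentOcc a j l.reverse ↔ AdjacentOcc a k l :=
  ⟨fun hl => by simpa using hl.reverse (j := k) (by simp; omega), fun hl => hl.reverse h⟩

lemma adjacentOcc_map_iff {f : α → β} (hf : ∀ x, f x = f a → x = a) :
    AdjacentOcc (f a) k (l.map f) ↔ AdjacentOcc a k l := by
  have hcount : ∀ p : List α, (p.map f).count (f a) = p.count a := fun p => by
    rw [List.count, List.countP_map]
    refine List.countP_congr fun x _ => ?_
    simpa only [Function.comp_apply, beq_iff_eq] using ⟨hf x, congrArg f⟩
  constructor
  · rintro ⟨p', q', h, hc⟩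
    obtain ⟨p, r, rfl, rfl, hr⟩ := List.map_eq_append_iff.1 h
    obtain ⟨x, r, rfl, hx, hr⟩ := List.map_eq_cons_iff.1 hr
    obtain ⟨y, q, rfl, hy, rfl⟩ := List.map_eq_cons_iff.1 hr
    rw [hf x hx, hf y hy]
    exact ⟨p, q, rfl, by rw [← hc, hcount]⟩
  · rintro ⟨p, q, rfl, rfl⟩
    exact ⟨p.map f, q.map f, by simp, hcount p⟩

lemma exists_insertAfter_eq_append_cons (h : k ≤ l.count a) :
    ∃ l₁ l₂, l = l₁ ++ l₂ ∧ insertAfter a k l = l₁ ++ a :: l₂ ∧ l₁.count a = k := by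
  induction l generalizing k with
  | nil =>
    obtain rfl : k = 0 := by simpa using h
    exact ⟨[], [], rfl, rfl, rfl⟩
  | cons b l ih =>
    cases k with
    | zero => exact ⟨[], b :: l, rfl, rfl, rfl⟩
    | succ k =>
      obtain ⟨l₁, l₂, rfl, h₁, h₂⟩ := ih (k := if b == a then k else k + 1) (by
        by_cases hb : b = a <;> simp_all)
      refine ⟨b :: l₁, l₂, rfl, by simp [insertAfter, h₁], ?_⟩
      by_cases hb : b = a <;> simp_all

lemma adjacentOcc_cons_self_iff_exists_insertAfter :
    AdjacentOcc a k (a :: l) ↔ ∃ l', k ≤ l'.count a ∧ insertAfter a k l' = l := by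
  induction l generalizing k with
  | nil =>
    constructor
    · rintro ⟨_ | ⟨_, p⟩, q, h, -⟩ <;> simp at h
    · rintro ⟨l', -, h⟩
      simpa [h] using length_insertAfter a k l'
  | cons b l ih =>
    cases k with
    | zero => simp [adjacentOcc_zero_cons_self_iff, insertAfter, eq_comm]
    | succ k =>
      have hstep : AdjacentOcc a (k + 1) (a :: b :: l) ↔
          AdjacentOcc a (if b == a then k else k + 1) (a :: l) := by
        by_cases hb : b = a
        · simp [hb, adjacentOcc_succ_cons_self_iff]
        · simp [hb, adjacentOcc_succ_cons_self_iff, adjacentOcc_cons_iff_of_ne]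
      rw [hstep, ih]
      constructor
      · rintro ⟨l', hk, rfl⟩
        refine ⟨b :: l', ?_, rfl⟩
        by_cases hb : b = a <;> simp_all
      · rintro ⟨_ | ⟨c, l'⟩, hk, h⟩
        · simp at hk
        · obtain ⟨rfl, rfl⟩ := List.cons.inj h
          refine ⟨l', ?_, rfl⟩
          by_cases hb : c = a <;> simp_all

end Lists

section MotzkinWords

variable {P Q : List (Option Bool)}

/-- Prefixes of Motzkin words: words staying weakly above the axis, ending at any height. -/
def IsMotzkinPrefix (w : List (Option Bool)) : Prop :=
  ∀ p : List (Option Bool), p <+: w → p.count (some false) ≤ p.count (some true)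

/-- The mirror image of a path, read from right to left with up and down steps exchanged. -/
def mirror (w : List (Option Bool)) : List (Option Bool) :=
  (w.map (Option.map not)).reverse

lemma mirror_involutive : Function.Involutive mirror := fun w => by
  simp [mirror, Function.comp_def]

@[simp] lemma mirror_mirror (w : List (Option Bool)) : mirror (mirror w) = w :=
  mirror_involutive w

@[simp] lemma mirror_append : mirror (P ++ Q) = mirror Q ++ mirror P := by
  simp [mirror]

@[simp] lemma length_mirror (w : List (Option Bool)) : (mirror w).length = w.length := by
  simp [mirror]

@[simp] lemma mirror_eq_nil_iff {w : List (Option Bool)} : mirror w = [] ↔ w = [] := by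
  simp [mirror]

@[simp] lemma count_some_mirror (w : List (Option Bool)) (b : Bool) :
    (mirror w).count (some b) = w.count (some !b) := by
  have hnot : Function.Injective not := Bool.involutive_not.injective
  rw [mirror, List.count_reverse, ← List.count_map_of_injective w (Option.map not)
    (Option.map_injective hnot), Option.map_some, Bool.not_not]

lemma isMotzkinWord_append_iff :
    IsMotzkinWord (P ++ Q) ↔
      (P ++ Q).count (some false) = (P ++ Q).count (some true) ∧
        IsMotzkinPrefix P ∧ IsMotzkinPrefix (mirror Q) := by
  refine and_congr_right fun hbal => ⟨fun h => ⟨fun p hp => ?_, fun p hp => ?_⟩, ?_⟩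
  · exact h p (hp.trans (List.prefix_append P Q))
  · obtain ⟨s, hs⟩ := hp
    have hQ : Q = mirror s ++ mirror p := by rw [← mirror_append, hs, mirror_mirror]
    have := h (P ++ mirror s) ⟨mirror p, by rw [hQ, List.append_assoc]⟩
    simp only [hQ, List.count_append, count_some_mirror, Bool.not_true, Bool.not_false]
      at this hbal
    omega
  · rintro ⟨hP, hQ⟩ p ⟨s, hs⟩
    rcases List.append_eq_append_iff.1 hs with ⟨r, rfl, -⟩ | ⟨r, rfl, rfl⟩
    · exact hP p (List.prefix_append p r)
    · have := hQ (mirror s) ⟨mirror r, mirror_append.symm⟩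
      simp only [List.count_append, count_some_mirror, Bool.not_true, Bool.not_false]
        at this hbal ⊢
      omega

lemma isMotzkinPrefix_append_none_iff : IsMotzkinPrefix (P ++ [none]) ↔ IsMotzkinPrefix P := by
  refine ⟨fun h p hp => h p (hp.trans (List.prefix_append P _)), fun h p hp => ?_⟩
  rcases List.prefix_concat_iff.1 hp with rfl | hp
  · simpa using h P (List.prefix_refl P)
  · exact h p hp

lemma isMotzkinWord_append_none_cons_iff :
    IsMotzkinWord (P ++ none :: Q) ↔ IsMotzkinWord (P ++ Q) := by
  have hmirror : mirror (none :: Q) = mirror Q ++ [none] := by simp [mirror]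
  rw [isMotzkinWord_append_iff, isMotzkinWord_append_iff, hmirror,
    isMotzkinPrefix_append_none_iff]
  simp

lemma isMotzkinPrefix_append_iff_left
    (h : (P ++ Q).count (some false) ≤ P.count (some true)) :
    IsMotzkinPrefix (P ++ Q) ↔ IsMotzkinPrefix P := by
  refine ⟨fun hPQ p hp => hPQ p (hp.trans (List.prefix_append P Q)), fun hP p hp => ?_⟩
  obtain ⟨s, hs⟩ := hp
  rcases List.append_eq_append_iff.1 hs with ⟨r, rfl, -⟩ | ⟨r, rfl, rfl⟩
  · exact hP p (List.prefix_append p r)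
  · simp only [List.count_append] at h ⊢
    omega

/-- Insert an up step into `P` right after its `k`-th up step, where `k` is the number of its down
steps. -/
def raise (P : List (Option Bool)) : List (Option Bool) :=
  insertAfter (some true) (P.count (some false)) P

/-- The mirror image of `raise`: a down step is inserted. -/
def lower (Q : List (Option Bool)) : List (Option Bool) := mirror (raise (mirror Q))

@[simp] lemma length_raise (P : List (Option Bool)) : (raise P).length = P.length + 1 :=
  length_insertAfter _ _ _

@[simp] lemma length_lower (Q : List (Option Bool)) : (lower Q).length = Q.length + 1 := by
  simp [lower]

@[simp] lemma count_true_raise (P : List (Option Bool)) :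
    (raise P).count (some true) = P.count (some true) + 1 :=
  ((insertAfter_perm _ _ _).count_eq _).trans (by simp)

@[simp] lemma count_false_raise (P : List (Option Bool)) :
    (raise P).count (some false) = P.count (some false) :=
  ((insertAfter_perm _ _ _).count_eq _).trans (by simp)

lemma raise_injective : Function.Injective raise := fun P P' h => by
  have hcount : P.count (some false) = P'.count (some false) := by
    simpa using congrArg (List.count (some false)) h
  rw [raise, raise, hcount] at h
  exact insertAfter_injective _ _ h

@[simp] lemma count_true_lower (Q : List (Option Bool)) :
    (lower Q).count (some true) = Q.count (some true) := by
  simp [lower]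

@[simp] lemma count_false_lower (Q : List (Option Bool)) :
    (lower Q).count (some false) = Q.count (some false) + 1 := by
  simp [lower]

lemma lower_injective : Function.Injective lower :=
  mirror_involutive.injective.comp (raise_injective.comp mirror_involutive.injective)

lemma isMotzkinPrefix_raise_iff (h : P.count (some false) ≤ P.count (some true)) :
    IsMotzkinPrefix (raise P) ↔ IsMotzkinPrefix P := by
  obtain ⟨P₁, P₂, hP, hraise, hcount⟩ := exists_insertAfter_eq_append_cons h
  have hfalse := count_false_raise P
  rw [raise, hraise] at hfalse
  rw [raise, hraise, isMotzkinPrefix_append_iff_left (by omega)]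
  rw [hP] at hcount ⊢
  rw [isMotzkinPrefix_append_iff_left hcount.ge]

lemma adjacentOcc_true_cons_iff_exists_raise (hP : IsMotzkinPrefix P) :
    AdjacentOcc (some true) (P.count (some false)) (some true :: P) ↔
      ∃ P', IsMotzkinPrefix P' ∧ raise P' = P := by
  rw [adjacentOcc_cons_self_iff_exists_insertAfter]
  constructor
  · rintro ⟨P', hk, h⟩
    have hcount : P'.count (some false) = P.count (some false) := by
      simpa [h] using ((insertAfter_perm (some true) (P.count (some false)) P').count_eq
        (some false)).symm
    rw [← hcount] at hk h
    exact ⟨P', (isMotzkinPrefix_raise_iff hk).1 (by rwa [raise, h]), h⟩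
  · rintro ⟨P', hP', rfl⟩
    rw [count_false_raise]
    exact ⟨P', hP' P' (List.prefix_refl P'), rfl⟩

lemma adjacentOcc_true_iff (hP : IsMotzkinPrefix P) :
    AdjacentOcc (some true) (P.count (some false)) (some true :: (P ++ some true :: Q)) ↔
      P = [] ∨ ∃ P', IsMotzkinPrefix P' ∧ raise P' = P := by
  rcases (hP P (List.prefix_refl P)).lt_or_eq with hlt | heq
  · have hne : P ≠ [] := by rintro rfl; simp at hlt
    rw [← List.cons_append, adjacentOcc_append_iff_left (by simpa using hlt),
      adjacentOcc_true_cons_iff_exists_raise hP, or_iff_right hne]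
  · have hraise : ¬ ∃ P', IsMotzkinPrefix P' ∧ raise P' = P := by
      rintro ⟨P', hP', rfl⟩
      have := hP' P' (List.prefix_refl P')
      simp only [count_false_raise, count_true_raise] at heq
      omega
    rw [or_iff_left hraise, heq]
    refine ⟨fun ⟨p, q, hpq, hp⟩ => ?_, by rintro rfl; exact adjacentOcc_zero_cons_self_iff.2 rfl⟩
    rcases P.eq_nil_or_concat' with rfl | ⟨Z, x, rfl⟩
    · rfl
    -- The last letter of `P` would be an up step, so `P` would come from below the axis.
    · have hlast : some true :: Z ++ [x] = p ++ [some true] :=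
        (append_cons_inj_of_count_eq (a := some true) (s := Q) (t := q)
          (by simpa using hpq) (by simp [hp, add_comm])).1
      obtain ⟨-, rfl⟩ : _ ∧ x = some true := by simpa using List.append_inj' hlast rfl
      have := hP Z (List.prefix_append Z _)
      have htrue : (Z ++ [some true]).count (some true) = Z.count (some true) + 1 := by simp
      have hfalse : (Z ++ [some true]).count (some false) = Z.count (some false) := by simp
      omega

lemma adjacentOcc_mirror_iff {w : List (Option Bool)} {b : Bool} {j k : ℕ}
    (h : k + j + 2 = w.count (some b)) :
    AdjacentOcc (some !b) j (mirror w) ↔ AdjacentOcc (some b) k w := by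
  have hnot : Function.Injective (Option.map not) :=
    Option.map_injective Bool.involutive_not.injective
  have hcount : k + j + 2 = (w.map (Option.map not)).count (some !b) := by
    rw [h, ← Bool.not_not b, ← count_some_mirror, mirror, List.count_reverse, Bool.not_not]
  exact (adjacentOcc_reverse_iff hcount).trans
    (adjacentOcc_map_iff (a := some b) fun _ hx => hnot hx)

lemma adjacentOcc_false_iff (hQ : IsMotzkinPrefix (mirror Q))
    (hPQ : (P ++ Q).count (some false) = (P ++ Q).count (some true)) :
    AdjacentOcc (some false) (P.count (some true)) (P ++ some false :: (Q ++ [some false])) ↔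
      Q = [] ∨ ∃ Q', IsMotzkinPrefix (mirror Q') ∧ lower Q' = Q := by
  have hmirror : mirror (P ++ some false :: (Q ++ [some false])) =
      some true :: (mirror Q ++ some true :: mirror P) := by simp [mirror]
  have hraise : (∃ P', IsMotzkinPrefix P' ∧ raise P' = mirror Q) ↔
      ∃ Q', IsMotzkinPrefix (mirror Q') ∧ lower Q' = Q := by
    rw [mirror_involutive.surjective.exists]
    simp only [lower, mirror_involutive.eq_iff]
  rw [← adjacentOcc_mirror_iff (j := (mirror Q).count (some false)), hmirror, Bool.not_false,
    adjacentOcc_true_iff hQ, hraise, mirror_eq_nil_iff]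
  simp only [List.count_append, List.count_cons_self, List.count_nil, count_some_mirror,
    Bool.not_false] at hPQ ⊢
  omega

lemma isMotzkinWord_and_adjacentOcc_iff :
    IsMotzkinWord (P ++ Q) ∧
      AdjacentOcc (some true) (P.count (some false)) (some true :: (P ++ some true :: Q)) ∧
      AdjacentOcc (some false) (P.count (some true)) (P ++ some false :: (Q ++ [some false])) ↔
    (P = [] ∧ Q = []) ∨ ∃ P' Q', IsMotzkinWord (P' ++ Q') ∧ raise P' = P ∧ lower Q' = Q := by
  have hturns : ∀ h : IsMotzkinWord (P ++ Q), _ := fun h =>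
    have ⟨hbal, hP, hQ⟩ := isMotzkinWord_append_iff.1 h
    and_congr (adjacentOcc_true_iff (Q := Q) hP) (adjacentOcc_false_iff hQ hbal)
  rw [and_congr_right hturns, isMotzkinWord_append_iff]
  constructor
  · rintro ⟨⟨hbal, -, -⟩, rfl | ⟨P', hP', rfl⟩, rfl | ⟨Q', hQ', rfl⟩⟩
    · exact .inl ⟨rfl, rfl⟩
    all_goals simp only [List.nil_append, List.append_nil, List.count_append, count_false_raise,
      count_true_raise, count_false_lower, count_true_lower] at hbal
    · have := hQ' _ (List.prefix_refl _)
      simp only [count_some_mirror, Bool.not_true, Bool.not_false] at this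
      omega
    · have := hP' _ (List.prefix_refl _)
      omega
    · refine .inr ⟨P', Q', isMotzkinWord_append_iff.2 ⟨?_, hP', hQ'⟩, rfl, rfl⟩
      simp only [List.count_append]
      omega
  · rintro (⟨rfl, rfl⟩ | ⟨P', Q', hPQ, rfl, rfl⟩)
    · exact ⟨⟨rfl, by simp [IsMotzkinPrefix], by simp [IsMotzkinPrefix, mirror]⟩,
        .inl rfl, .inl rfl⟩
    · obtain ⟨hbal, hP, hQ⟩ := isMotzkinWord_append_iff.1 hPQ
      simp only [List.count_append] at hbal
      refine ⟨⟨?_, (isMotzkinPrefix_raise_iff (hP _ (List.prefix_refl _))).2 hP, ?_⟩,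
        .inr ⟨P', hP, rfl⟩, .inr ⟨Q', hQ, rfl⟩⟩
      · simp only [List.count_append, count_false_raise, count_true_raise, count_false_lower,
          count_true_lower]
        omega
      · rwa [lower, mirror_mirror, isMotzkinPrefix_raise_iff (hQ _ (List.prefix_refl _))]

end MotzkinWords

section Turns

/-- For each occurrence of `b` in `w`, whether the letter after it differs from `b`; the word `w`
is thought of as being followed by the letter `e`. -/
def turns (b : Bool) : List Bool → Bool → List Bool
  | [], _ => []
  | a :: w, e => if a = b then (w.headD e == !b) :: turns b w e else turns b w e

lemma turns_append (b : Bool) (w₁ w₂ : List Bool) (e : Bool) :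
    turns b (w₁ ++ w₂) e = turns b w₁ (w₂.headD e) ++ turns b w₂ e := by
  induction w₁ with
  | nil => rfl
  | cons a w ih =>
    have hhead : (w ++ w₂).headD e = w.headD (w₂.headD e) := by cases w <;> rfl
    simp only [List.cons_append, turns, hhead, ih]
    split_ifs <;> rfl

lemma length_turns (b : Bool) (w : List Bool) (e : Bool) : (turns b w e).length = w.count b := by
  induction w with
  | nil => rfl
  | cons a w ih => by_cases h : a = b <;> simp [turns, h, ih]

lemma getLast?_turns_not_ne (b : Bool) (w : List Bool) :
    (turns (!b) w b).getLast? ≠ some false := by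
  induction w with
  | nil => simp [turns]
  | cons a w ih =>
    by_cases ha : a = !b
    · simp only [turns, ha, if_true, List.getLast?_cons]
      cases hlast : (turns (!b) w b).getLast? with
      | some v => simpa [hlast] using ih
      | none =>
        have hcount : w.count (!b) = 0 := by
          rw [← length_turns (!b) w b, List.getLast?_eq_none_iff.1 hlast, List.length_nil]
        cases w with
        | nil => simp
        | cons c w => cases b <;> cases c <;> simp_all
    · simpa [turns, ha] using ih

lemma exists_turns_not_eq_concat_true {b : Bool} {w : List Bool} (h : 0 < w.count !b) :
    ∃ X, turns (!b) w b = X ++ [true] := by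
  rcases hlast : (turns (!b) w b).getLast? with _ | _ | _
  · rw [← length_turns _ w b, List.getLast?_eq_none_iff.1 hlast] at h
    exact absurd h (lt_irrefl 0)
  · exact absurd hlast (getLast?_turns_not_ne b w)
  · exact List.getLast?_eq_some_iff.1 hlast

/-- Turns of the two kinds alternate along `w`. -/
lemma count_turns_true_add_toNat (w : List Bool) (e : Bool) :
    (turns true w e).count true + e.toNat =
      (turns false w e).count true + (w.headD e).toNat := by
  induction w with
  | nil => rfl
  | cons a w ih =>
    cases a <;> cases hw : w.headD e <;> grind [turns, Bool.toNat]

/-- The word with first letter `b`, turn sequences `X` at the letters `true` and `Y` at the letters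
`false`. -/
def weave : Bool → List Bool → List Bool → List Bool
  | true, x :: X, Y => true :: weave (!x) X Y
  | false, X, y :: Y => false :: weave y X Y
  | _, _, _ => []
termination_by _ X Y => X.length + Y.length

lemma weave_turns (w : List Bool) (e : Bool) :
    weave (w.headD e) (turns true w e) (turns false w e) = w := by
  induction w with
  | nil => cases e <;> simp [turns, weave]
  | cons a w ih => cases a <;> simpa [turns, weave] using ih

lemma headD_and_turns_weave {b : Bool} {X Y : List Bool} (hX : X.getLast? ≠ some false)
    (hY : Y.getLast? ≠ some true) (h : X.count true = Y.count true + b.toNat) :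
    (weave b X Y).headD false = b ∧ turns true (weave b X Y) false = X ∧
      turns false (weave b X Y) false = Y := by
  have htail {a c : Bool} {l : List Bool} (h : (a :: l).getLast? ≠ some c) :
      l.getLast? ≠ some c := fun hl => h (by simp [List.getLast?_cons, hl])
  induction b, X, Y using weave.induct with
  | case1 x X Y ih =>
    obtain ⟨hhead, htrue, hfalse⟩ := ih (htail hX) hY (by cases x <;> grind [Bool.toNat])
    simp [weave, turns, htrue, hfalse, hhead, -List.headD_eq_head?_getD]
  | case2 X y Y ih =>
    obtain ⟨hhead, htrue, hfalse⟩ := ih hX (htail hY) (by cases y <;> grind [Bool.toNat])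
    simp [weave, turns, htrue, hfalse, hhead, -List.headD_eq_head?_getD]
  | case3 b X Y h₁ h₂ =>
    obtain ⟨rfl, rfl⟩ : b = false ∧ Y = [] := by
      cases b
      · cases Y <;> simp_all
      · cases X <;> simp_all
    obtain rfl : X = [] := by
      rcases hlast : X.getLast? with _ | _ | _
      · exact List.getLast?_eq_none_iff.1 hlast
      · exact absurd hlast hX
      · exact absurd (List.mem_of_getLast? hlast) (List.count_eq_zero.1 h)
    simp [weave, turns]

end Turns

section Gaps

variable {b x e : Bool} {w w₁ w₂ X₁ X₂ : List Bool} {r : ℕ}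

/-- The common form of `rStat` and `sStat`: the number of letters `!b` between the `i`-th and the
`(i + 1)`-st letter `b`, with `i` counted from `1`. -/
def gap (b : Bool) (w : List Bool) (i : ℕ) : ℕ :=
  ((w.take ((w.findIdxs (· == b)).getD i 0)).drop
    ((w.findIdxs (· == b)).getD (i - 1) 0 + 1)).count (!b)

lemma rStat_eq_gap (w : List Bool) (i : ℕ) : rStat w i = gap true w i := rfl

lemma sStat_eq_gap (w : List Bool) (i : ℕ) : sStat w i = gap false w i := rfl

lemma getD_count_findIdxs_append_cons (b : Bool) (w₁ w₂ : List Bool) :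
    ((w₁ ++ b :: w₂).findIdxs (· == b)).getD (w₁.count b) 0 = w₁.length := by
  rw [List.findIdxs_append, List.getD_append_right _ _ _ _ (by simp [List.count])]
  simp [List.count]

lemma gap_append_cons_append_cons (hr : b ∉ X₁) :
    gap b (w₁ ++ b :: (X₁ ++ b :: w₂)) (w₁.count b + 1) = X₁.length := by
  have hcount : (w₁ ++ b :: X₁).count b = w₁.count b + 1 := by
    simp [List.count_eq_zero.2 hr]
  have hnext := getD_count_findIdxs_append_cons b (w₁ ++ b :: X₁) w₂
  rw [hcount, List.append_assoc, List.cons_append] at hnext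
  rw [gap, hnext, Nat.add_sub_cancel, getD_count_findIdxs_append_cons, ← List.cons_append,
    ← List.append_assoc, List.take_left, List.append_cons, List.drop_left' (by simp),
    List.count_eq_length]
  exact fun c hc => (Bool.eq_not.2 (ne_of_mem_of_not_mem hc hr)).symm

lemma exists_eq_append_of_turns_eq_append_cons (h : turns b w e = X₁ ++ x :: X₂) (hX₂ : X₂ ≠ []) :
    ∃ w₁ r w₂, w = w₁ ++ b :: (List.replicate r (!b) ++ b :: w₂) ∧
      turns b w₁ b = X₁ ∧ (x = true ↔ 0 < r) := by
  have hlen := congrArg List.length h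
  have hpos := List.length_pos_iff.2 hX₂
  simp only [length_turns, List.length_append, List.length_cons] at hlen
  obtain ⟨w₁, v, rfl, hw₁⟩ := exists_eq_append_cons_of_lt_count (k := X₁.length) (a := b) (l := w)
    (by omega)
  simp only [List.count_append, List.count_cons_self] at hlen
  obtain ⟨m, w₂, rfl, hm⟩ := exists_eq_append_cons_of_lt_count (k := 0) (a := b) (l := v)
    (by omega)
  have hmem : ∀ c ∈ m, c = !b := fun c hc =>
    Bool.eq_not.2 (ne_of_mem_of_not_mem hc (List.count_eq_zero.1 hm))
  rw [List.eq_replicate_of_mem hmem] at h ⊢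
  rw [turns_append] at h
  obtain ⟨hX₁, hx⟩ := List.append_inj h (by rw [length_turns, hw₁])
  refine ⟨w₁, m.length, w₂, rfl, hX₁, ?_⟩
  rw [turns, if_pos rfl] at hx
  rw [← (List.cons.inj hx).1]
  cases m.length <;> simp [List.replicate_succ]

lemma gap_pos_iff (h : turns b w e = X₁ ++ x :: X₂) (hX₂ : X₂ ≠ []) :
    0 < gap b w (X₁.length + 1) ↔ x = true := by
  obtain ⟨w₁, r, w₂, rfl, rfl, hx⟩ := exists_eq_append_of_turns_eq_append_cons h hX₂
  rw [length_turns, gap_append_cons_append_cons (by simp), List.length_replicate, hx]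

lemma turns_replicate_succ_self (b : Bool) (k : ℕ) :
    turns b (List.replicate (k + 1) b) (!b) = List.replicate k false ++ [true] := by
  induction k with
  | zero => simp [turns]
  | succ k ih =>
    rw [List.replicate_succ, turns, ih]
    simp [List.replicate_succ]

/-- The `k`-th entries `true` of the two turn sequences belong to consecutive runs of the word, so a
run of `!b` has length one when two entries `true` of the turns at `!b` are adjacent. -/
lemma adjacentOcc_turns_not_iff (hw₁ : w₁.headD b = !b) (hr : 0 < r) :
    AdjacentOcc true ((turns b w₁ b).count true)
      (turns (!b) (w₁ ++ b :: (List.replicate r (!b) ++ b :: w₂)) e) ↔ r = 1 := by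
  obtain ⟨k, rfl⟩ := Nat.exists_eq_succ_of_ne_zero hr.ne'
  have hbalance : (turns (!b) w₁ b).count true = (turns b w₁ b).count true + 1 := by
    have := count_turns_true_add_toNat w₁ b
    cases b <;> simp_all
  obtain ⟨Z, hZ⟩ : ∃ Z, turns (!b) w₁ b = Z ++ [true] := by
    refine exists_turns_not_eq_concat_true ?_
    rw [← length_turns (!b) w₁ b]
    exact (Nat.succ_pos _).trans_le (hbalance.ge.trans List.count_le_length)
  have hcount : Z.count true = (turns b w₁ b).count true := by
    simpa [hZ] using hbalance
  have hrun := turns_replicate_succ_self (!b) k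
  rw [Bool.not_not] at hrun
  have hturns : turns (!b) (w₁ ++ b :: (List.replicate (k + 1) (!b) ++ b :: w₂)) e =
      Z ++ true :: (List.replicate k false ++ true :: turns (!b) w₂ e) := by
    simp [turns_append, turns, hZ, hrun]
  rw [hturns, ← hcount, adjacentOcc_count_append_cons_iff]
  cases k <;> simp [List.replicate_succ]

lemma gap_eq_one_iff (h : turns b w e = X₁ ++ x :: X₂) (hX₂ : X₂ ≠ []) :
    gap b w (X₁.length + 1) = 1 ↔
      x = true ∧ AdjacentOcc true (X₁.count true) (turns (!b) ((!b) :: w) e) := by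
  obtain ⟨w₁, r, w₂, rfl, rfl, hx⟩ := exists_eq_append_of_turns_eq_append_cons h hX₂
  rw [length_turns, gap_append_cons_append_cons (by simp), List.length_replicate, hx]
  have hturns : turns b ((!b) :: w₁) b = turns b w₁ b := by simp [turns]
  rw [← hturns, ← List.cons_append]
  constructor
  · rintro rfl
    exact ⟨one_pos, (adjacentOcc_turns_not_iff rfl one_pos).2 rfl⟩
  · rintro ⟨hr, hadj⟩
    exact (adjacentOcc_turns_not_iff rfl hr).1 hadj

end Gaps

section Codes

variable {c c' P Q : List (Bool × Bool)} {w p q : List Bool}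

/-- The word whose turn sequences are the first and the second bits of `c`, completed by the turns
of the last two letters. The `i`-th letter of `c` thus records whether `rᵢ > 0` and whether
`sᵢ > 0`. -/
def toWord (c : List (Bool × Bool)) : List Bool :=
  weave true (c.map Prod.fst ++ [true]) (c.map Prod.snd ++ [false])

section Balanced

variable (hc : (c.map Prod.fst).count true = (c.map Prod.snd).count true)
include hc

lemma headD_and_turns_toWord :
    (toWord c).headD false = true ∧ turns true (toWord c) false = c.map Prod.fst ++ [true] ∧
      turns false (toWord c) false = c.map Prod.snd ++ [false] :=
  headD_and_turns_weave (by simp) (by simp) (by simp [hc])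

lemma turns_true_toWord : turns true (toWord c) false = c.map Prod.fst ++ [true] :=
  (headD_and_turns_toWord hc).2.1

lemma turns_false_toWord : turns false (toWord c) false = c.map Prod.snd ++ [false] :=
  (headD_and_turns_toWord hc).2.2

lemma count_toWord (b : Bool) : (toWord c).count b = c.length + 1 := by
  rw [← length_turns b _ false]
  cases b
  · simp [turns_false_toWord hc]
  · simp [turns_true_toWord hc]

lemma toWord_inj (hc' : (c'.map Prod.fst).count true = (c'.map Prod.snd).count true) :
    toWord c = toWord c' ↔ c = c' := by
  refine ⟨fun h => ?_, congrArg toWord⟩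
  have hfst := turns_true_toWord hc
  have hsnd := turns_false_toWord hc
  rw [h, turns_true_toWord hc', List.append_cancel_right_eq] at hfst
  rw [h, turns_false_toWord hc', List.append_cancel_right_eq] at hsnd
  rw [← List.zip_unzip c, ← List.zip_unzip c', List.unzip_eq_map, List.unzip_eq_map, hfst, hsnd]

end Balanced

lemma length_le_iff_count_le_count_take {Y Z : List Bool} (hZ : Z <+: Y)
    (hlast : Z.getLast? ≠ some false) (k : ℕ) :
    Z.length ≤ k ↔ Z.count true ≤ (Y.take k).count true := by
  constructor
  · intro hk
    exact (List.prefix_take_iff.2 ⟨hZ, hk⟩).sublist.count_le true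
  · intro h
    by_contra! hk
    rcases Z.eq_nil_or_concat' with rfl | ⟨Z, v, rfl⟩
    · simp at hk
    · obtain rfl : v = true := by simpa using hlast
      have htake : Y.take k <+: Z := by
        refine List.prefix_of_prefix_length_le (List.take_prefix k Y)
          ((List.prefix_append Z _).trans hZ) ?_
        rw [List.length_append, List.length_singleton] at hk
        rw [List.length_take]
        omega
      have := htake.sublist.count_le true
      rw [List.count_append, List.count_singleton_self] at h
      omega

lemma forall_prefix_count_false_le_iff (hw : w.count false = w.count true) :
    (∀ p, p <+: w → p.count false ≤ p.count true) ↔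
      ∀ p q, w = p ++ true :: q → p.count false ≤ p.count true := by
  refine ⟨fun h p q hpq => h p ⟨_, hpq.symm⟩, fun h => ?_⟩
  rintro p ⟨q, rfl⟩
  induction q generalizing p with
  | nil => simpa using hw.le
  | cons v q ih =>
    cases v with
    | true => exact h p q rfl
    | false =>
      have hconcat := ih (p ++ [false]) (by simpa using hw) (by simpa using h)
      calc p.count false ≤ (p ++ [false]).count false := (List.sublist_append_left _ _).count_le _
        _ ≤ (p ++ [false]).count true := hconcat
        _ = p.count true := by simp

/-- The two counts of `p` are the lengths of its turn sequences. As turns alternate, both sequences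
have the same number of entries `true`, and this makes their lengths comparable through the code. -/
lemma count_false_le_iff_of_toWord_eq
    (hc : (c.map Prod.fst).count true = (c.map Prod.snd).count true)
    (hp : toWord c = p ++ true :: q) :
    p.count false ≤ p.count true ↔ ((c.take (p.count true)).map Prod.fst).count true ≤
      ((c.take (p.count true)).map Prod.snd).count true := by
  have hlen : p.count true ≤ c.length := by
    have := count_toWord hc true
    simp only [hp, List.count_append, List.count_cons_self] at this
    omega
  obtain ⟨hhead, htrue, hfalse⟩ := headD_and_turns_toWord hc
  rw [hp, turns_append, List.headD_cons] at htrue hfalse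
  have hfst : turns true p true = (c.take (p.count true)).map Prod.fst := by
    rw [← length_turns true p true] at hlen ⊢
    have := congrArg (List.take (turns true p true).length) htrue
    rwa [List.take_left, List.take_append_of_le_length (by simpa using hlen),
      ← List.map_take] at this
  have hsnd : (c.map Prod.snd ++ [false]).take (p.count true) =
      (c.take (p.count true)).map Prod.snd := by
    rw [List.take_append_of_le_length (by simpa using hlen), List.map_take]
  have hcount : (turns false p true).count true = (turns true p true).count true := by
    have hphead : p.headD true = true := by
      rw [hp] at hhead
      cases p
      · rfl
      · simpa using hhead
    have := count_turns_true_add_toNat p true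
    rw [hphead] at this
    exact (Nat.add_right_cancel this).symm
  rw [← length_turns false p true, length_le_iff_count_le_count_take ⟨_, hfalse⟩
    (getLast?_turns_not_ne true p), hsnd, hcount, hfst]

lemma isDyckWord_toWord_iff (hc : (c.map Prod.fst).count true = (c.map Prod.snd).count true) :
    IsDyckWord (c.length + 1) (toWord c) ↔
      ∀ p, p <+: c → (p.map Prod.fst).count true ≤ (p.map Prod.snd).count true := by
  have htrue := count_toWord hc true
  have hfalse := count_toWord hc false
  have hlen : (toWord c).length = 2 * (c.length + 1) := by
    rw [← List.count_true_add_count_false, htrue, hfalse, two_mul]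
  rw [IsDyckWord, and_iff_right hlen, and_iff_right htrue, and_iff_right hfalse,
    forall_prefix_count_false_le_iff (hfalse.trans htrue.symm)]
  constructor
  · intro h p hp
    obtain ⟨w₁, w₂, hw, hw₁⟩ := exists_eq_append_cons_of_lt_count (k := p.length) (a := true)
      (l := toWord c) (by rw [htrue]; exact Nat.lt_succ_of_le hp.length_le)
    have := (count_false_le_iff_of_toWord_eq hc hw).1 (h w₁ w₂ hw)
    rwa [hw₁, ← List.prefix_iff_eq_take.1 hp] at this
  · intro h p q hpq
    exact (count_false_le_iff_of_toWord_eq hc hpq).2 (h _ (List.take_prefix _ _))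

lemma IsDyckWord.headD_eq_true {n : ℕ} (hn : 1 ≤ n) (hw : IsDyckWord n w) :
    w.headD false = true := by
  obtain ⟨hlen, -, -, hpre⟩ := hw
  cases w with
  | nil =>
    rw [List.length_nil] at hlen
    omega
  | cons a w =>
    have hcount := hpre [a] (List.prefix_append [a] w)
    cases a
    · exact absurd hcount (by decide)
    · rfl

lemma IsDyckWord.exists_turns_false_eq_concat {n : ℕ} (hn : 1 ≤ n) (hw : IsDyckWord n w) :
    ∃ Y, turns false w false = Y ++ [false] := by
  obtain ⟨hlen, htrue, hfalse, hpre⟩ := hw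
  rcases w.eq_nil_or_concat' with rfl | ⟨w, v, rfl⟩
  · rw [List.length_nil] at hlen
    omega
  · cases v
    · exact ⟨turns false w false, by simp [turns_append, turns]⟩
    · have := hpre w (List.prefix_append _ _)
      simp only [List.count_append, List.count_singleton_self] at htrue
      rw [List.count_append, List.count_eq_zero.2 (by decide : false ∉ [true])] at hfalse
      omega

lemma exists_toWord_eq {n : ℕ} (hn : 1 ≤ n) (hw : IsDyckWord n w) :
    ∃ c, (c.map Prod.fst).count true = (c.map Prod.snd).count true ∧ c.length + 1 = n ∧
      toWord c = w := by
  obtain ⟨X, hX⟩ : ∃ X, turns true w false = X ++ [true] :=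
    exists_turns_not_eq_concat_true (b := false) (by rw [Bool.not_false, hw.2.1]; exact hn)
  obtain ⟨Y, hY⟩ := hw.exists_turns_false_eq_concat hn
  have hXlen : X.length + 1 = n := by
    simpa [hX, hw.2.1] using length_turns true w false
  have hYlen : Y.length + 1 = n := by
    simpa [hY, hw.2.2.1] using length_turns false w false
  have hcount : X.count true = Y.count true := by
    have := count_turns_true_add_toNat w false
    rw [hw.headD_eq_true hn, hX, hY] at this
    simpa using this
  have hweave : weave true (X ++ [true]) (Y ++ [false]) = w := by
    simpa only [hX, hY, hw.headD_eq_true hn] using weave_turns w false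
  have hfst : (X.zip Y).map Prod.fst = X := List.map_fst_zip (by omega)
  have hsnd : (X.zip Y).map Prod.snd = Y := List.map_snd_zip (by omega)
  refine ⟨X.zip Y, by rw [hfst, hsnd, hcount], ?_, by rw [toWord, hfst, hsnd, hweave]⟩
  rw [List.length_zip, min_eq_left (by omega), hXlen]

end Codes

section Statistic

open Finset in
lemma prod_eq_prime_iff {ι : Type*} {s : Finset ι} {f : ι → ℕ} {p : ℕ} (hp : p.Prime) :
    ∏ i ∈ s, f i = p ↔ ∃ i ∈ s, f i = p ∧ ∀ j ∈ s, j ≠ i → f j = 1 := by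
  classical
  constructor
  · intro h
    obtain ⟨i, hi, hne⟩ := exists_ne_one_of_prod_ne_one (h.trans_ne hp.ne_one)
    rw [← mul_prod_erase s f hi] at h
    have hfi : f i = p := ((Nat.dvd_prime hp).1 (Dvd.intro _ h)).resolve_left hne
    rw [hfi, Nat.mul_eq_left hp.ne_zero, prod_eq_one_iff] at h
    exact ⟨i, hi, hfi, fun j hj hji => h j (mem_erase.2 ⟨hji, hj⟩)⟩
  · rintro ⟨i, hi, rfl, hone⟩
    exact prod_eq_single_of_mem i hi hone

lemma choose_add_eq_two_iff {r s : ℕ} : (r + s).choose r = 2 ↔ r = 1 ∧ s = 1 := by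
  refine ⟨fun h => ?_, by rintro ⟨rfl, rfl⟩; rfl⟩
  obtain _ | r := r
  · simp at h
  obtain _ | s := s
  · simp at h
  have hpascal : (r + 1 + (s + 1)).choose (r + 1) =
      (r + 1 + s).choose r + (r + 1 + s).choose (r + 1) := Nat.choose_succ_succ _ _
  have hpos₁ : 0 < (r + 1 + s).choose r := Nat.choose_pos (by omega)
  have hpos₂ : 0 < (r + 1 + s).choose (r + 1) := Nat.choose_pos (by omega)
  have hone₁ : (r + 1 + s).choose r = 1 := by omega
  have hone₂ : (r + 1 + s).choose (r + 1) = 1 := by omega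
  rw [Nat.choose_eq_one_iff] at hone₁ hone₂
  omega

lemma LStat_eq_two_iff {n : ℕ} {w : List Bool} :
    LStat n w = 2 ↔ ∃ i ∈ Finset.Icc 1 (n - 1), (rStat w i = 1 ∧ sStat w i = 1) ∧
      ∀ j ∈ Finset.Icc 1 (n - 1), j ≠ i → ¬ (0 < rStat w j ∧ 0 < sStat w j) := by
  have hone : ∀ r s : ℕ, (r + s).choose r = 1 ↔ ¬ (0 < r ∧ 0 < s) := fun r s => by
    rw [Nat.choose_eq_one_iff]
    omega
  simp only [LStat, prod_eq_prime_iff Nat.prime_two, choose_add_eq_two_iff, hone]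

variable {c P Q : List (Bool × Bool)} {a : Bool × Bool}
  (hc : (c.map Prod.fst).count true = (c.map Prod.snd).count true) (hPQ : c = P ++ a :: Q)
include hc hPQ

lemma turns_true_toWord_append_cons :
    turns true (toWord c) false = P.map Prod.fst ++ a.1 :: (Q.map Prod.fst ++ [true]) := by
  rw [turns_true_toWord hc, hPQ]
  simp

lemma turns_false_toWord_append_cons :
    turns false (toWord c) false = P.map Prod.snd ++ a.2 :: (Q.map Prod.snd ++ [false]) := by
  rw [turns_false_toWord hc, hPQ]
  simp

lemma rStat_toWord_pos_iff : 0 < rStat (toWord c) (P.length + 1) ↔ a.1 = true := by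
  simpa [rStat_eq_gap] using gap_pos_iff (turns_true_toWord_append_cons hc hPQ) (by simp)

lemma sStat_toWord_pos_iff : 0 < sStat (toWord c) (P.length + 1) ↔ a.2 = true := by
  simpa [sStat_eq_gap] using gap_pos_iff (turns_false_toWord_append_cons hc hPQ) (by simp)

lemma rStat_toWord_eq_one_iff : rStat (toWord c) (P.length + 1) = 1 ↔
    a.1 = true ∧ AdjacentOcc true ((P.map Prod.fst).count true) (true :: c.map Prod.snd) := by
  have hgap := gap_eq_one_iff (turns_true_toWord_append_cons hc hPQ) (by simp)
  have hturns : turns (!true) ((!true) :: toWord c) false =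
      true :: c.map Prod.snd ++ [false] := by
    obtain ⟨hhead, -, hfalse⟩ := headD_and_turns_toWord hc
    simp [turns, hhead, hfalse, -List.headD_eq_head?_getD]
  rw [List.length_map, hturns] at hgap
  rw [rStat_eq_gap, hgap]
  refine and_congr_right fun ha => adjacentOcc_append_iff_left ?_
  rw [List.count_cons_self, ← hc, hPQ]
  simp [ha]

lemma sStat_toWord_eq_one_iff : sStat (toWord c) (P.length + 1) = 1 ↔
    a.2 = true ∧ AdjacentOcc true ((P.map Prod.snd).count true) (c.map Prod.fst ++ [true]) := by
  have hgap := gap_eq_one_iff (turns_false_toWord_append_cons hc hPQ) (by simp)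
  have hturns : turns (!false) ((!false) :: toWord c) false =
      false :: (c.map Prod.fst ++ [true]) := by
    obtain ⟨hhead, htrue, -⟩ := headD_and_turns_toWord hc
    simp [turns, hhead, htrue, -List.headD_eq_head?_getD]
  rwa [List.length_map, hturns, adjacentOcc_cons_iff_of_ne (by simp), ← sStat_eq_gap] at hgap

omit hPQ

lemma LStat_toWord_eq_two_iff : LStat (c.length + 1) (toWord c) = 2 ↔
    ∃ P Q, c = P ++ (true, true) :: Q ∧ (true, true) ∉ P ∧ (true, true) ∉ Q ∧
      AdjacentOcc true ((P.map Prod.fst).count true) (true :: c.map Prod.snd) ∧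
      AdjacentOcc true ((P.map Prod.snd).count true) (c.map Prod.fst ++ [true]) := by
  rw [LStat_eq_two_iff, Nat.add_sub_cancel]
  constructor
  · rintro ⟨i, hi, ⟨hr, hs⟩, huniq⟩
    obtain ⟨P, a, Q, hPQ, rfl⟩ := exists_eq_append_cons_of_mem_Icc hi
    obtain ⟨ha₁, hup⟩ := (rStat_toWord_eq_one_iff hc hPQ).1 hr
    obtain ⟨ha₂, hdown⟩ := (sStat_toWord_eq_one_iff hc hPQ).1 hs
    obtain rfl : a = (true, true) := Prod.ext ha₁ ha₂
    obtain ⟨hP, hQ⟩ := notMem_and_notMem_iff_forall_append_cons_eq.2 fun p q hpq => by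
      have hc' := hPQ.trans hpq
      have hlen : p.length + 1 = P.length + 1 := by
        by_contra hne
        exact huniq _ (by simp [hc']) hne
          ⟨(rStat_toWord_pos_iff hc hc').2 rfl, (sStat_toWord_pos_iff hc hc').2 rfl⟩
      exact (List.append_inj hpq (Nat.succ.inj hlen).symm).1.symm
    exact ⟨P, Q, hPQ, hP, hQ, hup, hdown⟩
  · rintro ⟨P, Q, hPQ, hP, hQ, hup, hdown⟩
    refine ⟨P.length + 1, by simp [hPQ], ⟨(rStat_toWord_eq_one_iff hc hPQ).2 ⟨rfl, hup⟩,
      (sStat_toWord_eq_one_iff hc hPQ).2 ⟨rfl, hdown⟩⟩, ?_⟩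
    rintro j hj hji ⟨hr, hs⟩
    obtain ⟨p, a, q, hpq, rfl⟩ := exists_eq_append_cons_of_mem_Icc hj
    obtain rfl : a = (true, true) :=
      Prod.ext ((rStat_toWord_pos_iff hc hpq).1 hr) ((sStat_toWord_pos_iff hc hpq).1 hs)
    rw [notMem_and_notMem_iff_forall_append_cons_eq.1 ⟨hP, hQ⟩ p q (hPQ.symm.trans hpq)] at hji
    exact hji rfl

end Statistic

section MarkedMotzkinWords

variable {P Q P' Q' : List (Option Bool)}

/-- The step of a Motzkin path recorded by a letter of a code: up when only `sᵢ > 0`, down when only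
`rᵢ > 0`, and horizontal otherwise. -/
def motzkinStep : Bool × Bool → Option Bool
  | (false, true) => some true
  | (true, false) => some false
  | _ => none

/-- The right inverse of `motzkinStep` whose values avoid the letter `(true, true)`. -/
def stepCode (a : Option Bool) : Bool × Bool := (a == some false, a == some true)

lemma motzkinStep_stepCode : ∀ a, motzkinStep (stepCode a) = a := by decide

lemma map_motzkinStep_map_stepCode (P : List (Option Bool)) :
    (P.map stepCode).map motzkinStep = P := by
  rw [List.map_map]
  exact (List.map_congr_left fun a _ => motzkinStep_stepCode a).trans (List.map_id P)

lemma stepCode_motzkinStep : ∀ v, v ≠ (true, true) → stepCode (motzkinStep v) = v := by decide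

lemma map_stepCode_map_motzkinStep {c : List (Bool × Bool)} (hc : (true, true) ∉ c) :
    (c.map motzkinStep).map stepCode = c := by
  rw [List.map_map]
  exact (List.map_congr_left fun v hv =>
    stepCode_motzkinStep v (ne_of_mem_of_not_mem hv hc)).trans (List.map_id c)

lemma count_map_motzkinStep (c : List (Bool × Bool)) :
    (c.map motzkinStep).count (some false) + (c.map Prod.snd).count true =
      (c.map motzkinStep).count (some true) + (c.map Prod.fst).count true := by
  induction c with
  | nil => rfl
  | cons v c ih =>
    obtain ⟨_ | _, _ | _⟩ := v <;> grind [motzkinStep]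

lemma isMotzkinWord_map_motzkinStep_iff {c : List (Bool × Bool)} :
    IsMotzkinWord (c.map motzkinStep) ↔
      (c.map Prod.fst).count true = (c.map Prod.snd).count true ∧
        ∀ p, p <+: c → (p.map Prod.fst).count true ≤ (p.map Prod.snd).count true := by
  refine and_congr ?_ ⟨fun h p hp => ?_, fun h q hq => ?_⟩
  · have := count_map_motzkinStep c
    omega
  · have := count_map_motzkinStep p
    have := h _ (hp.map motzkinStep)
    omega
  · obtain ⟨p, hp, rfl⟩ := List.prefix_map_iff.1 hq
    have := count_map_motzkinStep p
    have := h p hp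
    omega

/-- The code of a path, cut as `P ++ Q`, with the letter `(true, true)` inserted at the cut. -/
def markedCode (P Q : List (Option Bool)) : List (Bool × Bool) :=
  P.map stepCode ++ (true, true) :: Q.map stepCode

lemma length_markedCode (P Q : List (Option Bool)) :
    (markedCode P Q).length = P.length + Q.length + 1 := by
  simp [markedCode, add_assoc]

lemma true_true_notMem_map_stepCode (P : List (Option Bool)) :
    (true, true) ∉ P.map stepCode := by
  simp [stepCode]

lemma markedCode_inj : markedCode P Q = markedCode P' Q' ↔ P = P' ∧ Q = Q' := by
  have hinj := List.map_injective_iff.2 (Function.LeftInverse.injective motzkinStep_stepCode)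
  refine ⟨fun h => ?_, by rintro ⟨rfl, rfl⟩; rfl⟩
  have hP := notMem_and_notMem_iff_forall_append_cons_eq.1
    ⟨true_true_notMem_map_stepCode P, true_true_notMem_map_stepCode Q⟩ _ _ h
  rw [markedCode, markedCode, hP] at h
  exact ⟨(hinj hP).symm, hinj (List.cons.inj (List.append_cancel_left h)).2⟩

lemma isMotzkinWord_append_iff_markedCode :
    IsMotzkinWord (P ++ Q) ↔
      ((markedCode P Q).map Prod.fst).count true = ((markedCode P Q).map Prod.snd).count true ∧
        ∀ p, p <+: markedCode P Q →
          (p.map Prod.fst).count true ≤ (p.map Prod.snd).count true := by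
  rw [← isMotzkinWord_map_motzkinStep_iff, ← isMotzkinWord_append_none_cons_iff, markedCode,
    List.map_append, List.map_cons, map_motzkinStep_map_stepCode, map_motzkinStep_map_stepCode]
  rfl

lemma adjacentOcc_snd_markedCode_iff :
    AdjacentOcc true (((P.map stepCode).map Prod.fst).count true)
        (true :: (markedCode P Q).map Prod.snd) ↔
      AdjacentOcc (some true) (P.count (some false)) (some true :: (P ++ some true :: Q)) := by
  rw [← adjacentOcc_map_iff (f := (· == some true)) (by simp)]
  simp [markedCode, stepCode, Function.comp_def, List.count, List.countP_map]

lemma adjacentOcc_fst_markedCode_iff :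
    AdjacentOcc true (((P.map stepCode).map Prod.snd).count true)
        ((markedCode P Q).map Prod.fst ++ [true]) ↔
      AdjacentOcc (some false) (P.count (some true)) (P ++ some false :: (Q ++ [some false])) := by
  rw [← adjacentOcc_map_iff (f := (· == some false)) (by simp)]
  simp [markedCode, stepCode, Function.comp_def, List.count, List.countP_map]

lemma LStat_toWord_markedCode_eq_two_iff (h : IsMotzkinWord (P ++ Q)) :
    LStat ((markedCode P Q).length + 1) (toWord (markedCode P Q)) = 2 ↔
      AdjacentOcc (some true) (P.count (some false)) (some true :: (P ++ some true :: Q)) ∧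
      AdjacentOcc (some false) (P.count (some true)) (P ++ some false :: (Q ++ [some false])) := by
  rw [LStat_toWord_eq_two_iff (isMotzkinWord_append_iff_markedCode.1 h).1,
    ← adjacentOcc_snd_markedCode_iff, ← adjacentOcc_fst_markedCode_iff]
  constructor
  · rintro ⟨p, q, hpq, -, -, hup, hdown⟩
    obtain rfl := notMem_and_notMem_iff_forall_append_cons_eq.1
      ⟨true_true_notMem_map_stepCode P, true_true_notMem_map_stepCode Q⟩ p q hpq
    exact ⟨hup, hdown⟩
  · rintro ⟨hup, hdown⟩
    exact ⟨_, _, rfl, true_true_notMem_map_stepCode P, true_true_notMem_map_stepCode Q, hup, hdown⟩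

lemma toWord_markedCode_inj (h : IsMotzkinWord (P ++ Q)) (h' : IsMotzkinWord (P' ++ Q')) :
    toWord (markedCode P Q) = toWord (markedCode P' Q') ↔ P = P' ∧ Q = Q' := by
  rw [toWord_inj (isMotzkinWord_append_iff_markedCode.1 h).1
    (isMotzkinWord_append_iff_markedCode.1 h').1, markedCode_inj]

lemma mem_dyckL_two_iff_exists_markedCode {n : ℕ} (hn : 1 ≤ n) {w : List Bool} :
    w ∈ dyckL n 2 ↔ ∃ P Q, (IsMotzkinWord (P ++ Q) ∧
      AdjacentOcc (some true) (P.count (some false)) (some true :: (P ++ some true :: Q)) ∧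
      AdjacentOcc (some false) (P.count (some true)) (P ++ some false :: (Q ++ [some false]))) ∧
      P.length + Q.length + 2 = n ∧ toWord (markedCode P Q) = w := by
  constructor
  · rintro ⟨hw, hL⟩
    obtain ⟨c, hc, rfl, rfl⟩ := exists_toWord_eq hn hw
    obtain ⟨p, q, hpq, hp, hq, -⟩ := (LStat_toWord_eq_two_iff hc).1 hL
    obtain ⟨P, Q, rfl⟩ : ∃ P Q, c = markedCode P Q := ⟨p.map motzkinStep, q.map motzkinStep, by
      rw [markedCode, map_stepCode_map_motzkinStep hp, map_stepCode_map_motzkinStep hq, hpq]⟩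
    have hPQ : IsMotzkinWord (P ++ Q) :=
      isMotzkinWord_append_iff_markedCode.2 ⟨hc, (isDyckWord_toWord_iff hc).1 hw⟩
    exact ⟨P, Q, ⟨hPQ, (LStat_toWord_markedCode_eq_two_iff hPQ).1 hL⟩,
      by rw [length_markedCode], rfl⟩
  · rintro ⟨P, Q, ⟨hPQ, hadj⟩, rfl, rfl⟩
    obtain ⟨hc, hpre⟩ := isMotzkinWord_append_iff_markedCode.1 hPQ
    have hL := (LStat_toWord_markedCode_eq_two_iff hPQ).2 hadj
    have hw := (isDyckWord_toWord_iff hc).2 hpre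
    rw [length_markedCode] at hL hw
    exact ⟨hw, hL⟩

lemma mem_dyckL_two_iff {n : ℕ} (hn : 1 ≤ n) {w : List Bool} :
    w ∈ dyckL n 2 ↔ (n = 2 ∧ w = toWord (markedCode [] [])) ∨
      ∃ P Q, IsMotzkinWord (P ++ Q) ∧ P.length + Q.length + 4 = n ∧
        toWord (markedCode (raise P) (lower Q)) = w := by
  simp only [mem_dyckL_two_iff_exists_markedCode hn, isMotzkinWord_and_adjacentOcc_iff]
  constructor
  · rintro ⟨_, _, ⟨rfl, rfl⟩ | ⟨P, Q, hPQ, rfl, rfl⟩, rfl, rfl⟩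
    · exact .inl ⟨rfl, rfl⟩
    · exact .inr ⟨P, Q, hPQ, by rw [length_raise, length_lower]; omega, rfl⟩
  · rintro (⟨rfl, rfl⟩ | ⟨P, Q, hPQ, rfl, rfl⟩)
    · exact ⟨[], [], .inl ⟨rfl, rfl⟩, rfl, rfl⟩
    · exact ⟨_, _, .inr ⟨P, Q, hPQ, rfl, rfl⟩, by rw [length_raise, length_lower]; omega, rfl⟩

lemma IsMotzkinWord.raise_append_lower (h : IsMotzkinWord (P ++ Q)) :
    IsMotzkinWord (raise P ++ lower Q) :=
  (isMotzkinWord_and_adjacentOcc_iff.2 (.inr ⟨P, Q, h, rfl, rfl⟩)).1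

end MarkedMotzkinWords

section Counting

/-- The Motzkin paths of length `m`, each cut in two at one of its `m + 1` vertices. -/
def cutMotzkinWords (m : ℕ) : Set (List (Option Bool) × List (Option Bool)) :=
  {c | c.1.length + c.2.length = m ∧ IsMotzkinWord (c.1 ++ c.2)}

lemma ncard_cutMotzkinWords (m : ℕ) : (cutMotzkinWords m).ncard = (m + 1) * motzkin m := by
  let cut (c : ℕ × List (Option Bool)) := (c.2.take c.1, c.2.drop c.1)
  let motzkinWords := {w : List (Option Bool) | w.length = m ∧ IsMotzkinWord w}
  have hinj : Set.InjOn cut (Set.Iic m ×ˢ motzkinWords) := by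
    rintro ⟨k, l⟩ ⟨hk : k ≤ m, hl : l.length = m, -⟩ ⟨k', l'⟩ ⟨hk' : k' ≤ m, -, -⟩ h
    obtain ⟨htake, hdrop⟩ : l.take k = l'.take k' ∧ l.drop k = l'.drop k' := Prod.ext_iff.1 h
    obtain rfl : l = l' := by
      rw [← List.take_append_drop k l, htake, hdrop, List.take_append_drop]
    have := congrArg List.length htake
    simp only [List.length_take, hl, min_eq_left hk, min_eq_left hk'] at this
    rw [this]
  have himage : cut '' (Set.Iic m ×ˢ motzkinWords) = cutMotzkinWords m := by
    ext ⟨P, Q⟩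
    constructor
    · rintro ⟨⟨k, l⟩, ⟨-, hlen, hl⟩, h⟩
      obtain ⟨rfl, rfl⟩ := Prod.ext_iff.1 h
      exact ⟨by rw [← List.length_append, List.take_append_drop, hlen],
        by rwa [List.take_append_drop]⟩
    · rintro ⟨hlen, h⟩
      refine ⟨(P.length, P ++ Q), ⟨Nat.le.intro hlen, List.length_append.trans hlen, h⟩, ?_⟩
      simp only [cut, List.take_left, List.drop_left]
  rw [← himage, hinj.ncard_image, Set.ncard_prod, ← Finset.coe_Iic, Set.ncard_coe_finset,
    Nat.card_Iic, motzkin]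

lemma ncard_dyckL_add_four_two (m : ℕ) : (dyckL (m + 4) 2).ncard = (m + 1) * motzkin m := by
  let embed (c : List (Option Bool) × List (Option Bool)) :=
    toWord (markedCode (raise c.1) (lower c.2))
  have himage : embed '' cutMotzkinWords m = dyckL (m + 4) 2 := by
    ext w
    rw [mem_dyckL_two_iff (by omega), or_iff_right (by omega)]
    simp only [Set.mem_image, cutMotzkinWords, Set.mem_ofPred_eq, Prod.exists, and_assoc,
      Nat.add_right_cancel_iff, embed, and_left_comm]
  have hinj : Set.InjOn embed (cutMotzkinWords m) := by
    rintro ⟨P, Q⟩ ⟨-, h⟩ ⟨P', Q'⟩ ⟨-, h'⟩ heq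
    obtain ⟨hP, hQ⟩ := (toWord_markedCode_inj h.raise_append_lower h'.raise_append_lower).1 heq
    exact Prod.ext (raise_injective hP) (lower_injective hQ)
  rw [← himage, hinj.ncard_image, ncard_cutMotzkinWords]

lemma dyckL_two_two : dyckL 2 2 = {toWord (markedCode [] [])} := by
  ext w
  rw [mem_dyckL_two_iff one_le_two, Set.mem_singleton_iff, or_iff_left, and_iff_right rfl]
  rintro ⟨P, Q, -, hlen, -⟩
  omega

lemma dyckL_three_two : dyckL 3 2 = ∅ := by
  refine Set.eq_empty_of_forall_notMem fun w hw => ?_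
  obtain ⟨h, -⟩ | ⟨P, Q, -, hlen, -⟩ := (mem_dyckL_two_iff (by norm_num)).1 hw
  · exact absurd h (by norm_num)
  · omega

end Counting

/-- **Theorem (L = 2).** For `n ≥ 4`, `|𝒟ₙ²| = (n-3)·M_{n-4}`; moreover
`|𝒟₂²| = 1` and `|𝒟₃²| = 0`. -/
theorem dyck_L_eq_two_count :
    (∀ n : ℕ, 4 ≤ n → (dyckL n 2).ncard = (n - 3) * motzkin (n - 4)) ∧
    (dyckL 2 2).ncard = 1 ∧ (dyckL 3 2).ncard = 0 := by
  refine ⟨fun n hn => ?_, ?_, ?_⟩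
  · obtain ⟨m, rfl⟩ := Nat.exists_eq_add_of_le' hn
    exact ncard_dyckL_add_four_two m
  · rw [dyckL_two_two, Set.ncard_singleton]
  · rw [dyckL_three_two, Set.ncard_empty]
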